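/- Let m ≥ 3 and 0 ≤ r ≤ m−1. Then U_{α^(m)}(RM(r,m)) + U_{β^(m)}(RM(r,m)) + U_1(RM(r,m)) = k(r,m) − τ(r,m). -/

import Mathlib

open Module

/-- The submodule of vectors supported on `J` (i.e. zero outside `J`). -/
def supportedOn (F : Type) [Field F] {n : ℕ} (J : Set (Fin n)) : Submodule F (Fin n → F) :=
  Submodule.pi Jᶜ fun _ => ⊥

/-- Dimension of the shortening `C_J` of the code `C` to the coordinates in `J`. -/
noncomputable def shortDim {F : Type} [Field F] {n : ℕ}
    (C : Submodule F (Fin n → F)) (J : Set (Fin n)) : ℕ :=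
  finrank F ↥(C ⊓ supportedOn F J)

/-- Support of a subcode. -/
def chi {F : Type} [Field F] {n : ℕ} (D : Submodule F (Fin n → F)) : Set (Fin n) :=
  {i | ∃ c ∈ D, c i ≠ 0}

/-- `Ucap C s`: maximal dimension of a subcode of `C` whose support has size at most `s`. -/
noncomputable def Ucap {F : Type} [Field F] {n : ℕ}
    (C : Submodule F (Fin n → F)) (s : ℕ) : ℕ :=
  sSup {d : ℕ | ∃ D : Submodule F (Fin n → F), D ≤ C ∧ (chi D).ncard ≤ s ∧ finrank F ↥D = d}

/-- The binary Reed–Muller code `RM(r,m)`: the evaluation vectors, at the points of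
`{0,1}^m` listed in the standard bit order, of the `m`-variable polynomials over `F₂`
of total degree at most `r`. -/
def RMcode (r m : ℕ) : Submodule (ZMod 2) (Fin (2 ^ m) → ZMod 2) :=
  Submodule.span (ZMod 2)
    {w | ∃ f : MvPolynomial (Fin m) (ZMod 2), f.totalDegree ≤ r ∧
      w = fun i => MvPolynomial.eval (fun j : Fin m => if Nat.testBit i.val j.val then 1 else 0) f}

/-- `k(r,m) = ∑_{j=0}^{r} C(m,j)`, the dimension of `RM(r,m)`. -/
def kRM (r m : ℕ) : ℕ := ∑ j ∈ Finset.range (r + 1), Nat.choose m j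

/-- The claimed value `τ(r,m)` of the trelliswidth of `RM(r,m)`. -/
def tauRM (r m : ℕ) : ℕ :=
  if 2 * r + 1 ≤ m then ∑ j ∈ Finset.range (r + 1), Nat.choose (m - (2 * j + 1)) (r - j)
  else 1 + ∑ j ∈ Finset.range (m - r), Nat.choose (m - (2 * j + 1)) (r - j)

/-- `α(m)`: the largest integer not exceeding `(2/3)·2^m`. -/
def alph (m : ℕ) : ℕ := 2 ^ (m + 1) / 3

/-- `β(m)`: the largest integer not exceeding `(1/3)·2^m`. -/
def bet (m : ℕ) : ℕ := 2 ^ m / 3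

/-!
With `t = m - r`, the value `U_s (RM(r,m))` is the number `N s t` of integers `i < s` having at
least `t` binary ones. For the lower bound, each such `i` gives the polynomial `∏ (1 - X_j)` over
the zero bits `j` of `i`, of degree at most `r`; it is `1` at `i` and vanishes at all larger points,
so these polynomials are independent and supported on `{0, …, s - 1}`. For the upper bound, halve
the cube as in the `(u | u + v)` construction. If a subcode has support `J₁` in one half and `J₀`
in the other, the differences of the halves of its words live on `J₁ ∪ J₀`, and its words with equal
halves on `J₁ ∩ J₀`. Since `N a t + N b (t - 1) ≤ N (a + b) t` for `b ≤ a`, the bound follows by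
induction on `m`.

It remains to prove `N α t + N β t + τ(r,m) = N (2 ^ m) t`. Passing from `m` to `m + 2` prepends
the bits `10` to `α` and `01` to `β`, so both sides satisfy the same recursion in
`(r, m) ↦ (r + 1, m + 2)`.
-/

open Finset

/-! ### Counting integers of large binary weight -/

/-- The Hamming weight of the binary expansion of `n`. -/
def binaryWeight (n : ℕ) : ℕ := n.bitIndices.length

@[simp]
lemma binaryWeight_zero : binaryWeight 0 = 0 := by simp [binaryWeight]

@[simp]
lemma binaryWeight_two_mul (n : ℕ) : binaryWeight (2 * n) = binaryWeight n := by
  simp [binaryWeight]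

@[simp]
lemma binaryWeight_two_mul_add_one (n : ℕ) : binaryWeight (2 * n + 1) = binaryWeight n + 1 := by
  simp [binaryWeight]

lemma binaryWeight_eq_card_testBit {m i : ℕ} (hi : i < 2 ^ m) :
    binaryWeight i = #{j : Fin m | i.testBit j} := by
  have hmem : i.bitIndices.toFinset =
      ({j : Fin m | i.testBit j} : Finset (Fin m)).map Fin.valEmbedding := by
    ext j
    simp only [List.mem_toFinset, Nat.mem_bitIndices, mem_map, mem_filter_univ, Fin.exists_iff,
      Fin.valEmbedding_apply, exists_and_right, exists_eq_right, exists_prop]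
    exact ⟨fun hj => ⟨(Nat.pow_lt_pow_iff_right one_lt_two).1
      ((Nat.ge_two_pow_of_testBit hj).trans_lt hi), hj⟩, And.right⟩
  rw [binaryWeight, ← List.toFinset_card_of_nodup Nat.bitIndices_nodup, hmem, card_map]

lemma two_pow_binaryWeight_le (n : ℕ) : 2 ^ binaryWeight n ≤ n + 1 := by
  induction n using Nat.evenOddRec with
  | h0 => simp
  | h_even n ih =>
    rw [binaryWeight_two_mul]
    lia
  | h_odd n ih =>
    rw [binaryWeight_two_mul_add_one, pow_succ]
    lia

lemma binaryWeight_two_pow_add {m k : ℕ} (hk : k < 2 ^ m) :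
    binaryWeight (2 ^ m + k) = binaryWeight k + 1 := by
  induction m generalizing k with
  | zero =>
    obtain rfl : k = 0 := by simpa using hk
    simpa using binaryWeight_two_mul_add_one 0
  | succ m ih =>
    rw [pow_succ'] at hk ⊢
    obtain ⟨n, rfl | rfl⟩ := k.even_or_odd'
    · rw [← mul_add, binaryWeight_two_mul, binaryWeight_two_mul, ih (by lia)]
    · rw [← add_assoc, ← mul_add, binaryWeight_two_mul_add_one, binaryWeight_two_mul_add_one,
        ih (by lia)]

/-- The number of `i < s` whose binary weight is at least `t`. -/
def heavyCount (s t : ℕ) : ℕ := Nat.count (fun i => t ≤ binaryWeight i) s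

@[simp]
lemma heavyCount_zero_left (t : ℕ) : heavyCount 0 t = 0 := Nat.count_zero _

@[simp]
lemma heavyCount_zero_right (s : ℕ) : heavyCount s 0 = s := by simp [heavyCount]

lemma heavyCount_succ_left (s t : ℕ) :
    heavyCount (s + 1) t = heavyCount s t + if t ≤ binaryWeight s then 1 else 0 :=
  Nat.count_succ _ _

lemma heavyCount_mono_left (t : ℕ) : Monotone (heavyCount · t) := Nat.count_monotone _

lemma heavyCount_eq_zero {s t : ℕ} (h : s < 2 ^ t) : heavyCount s t = 0 := by
  refine Nat.count_iff_forall_not.2 fun i hi hti => ?_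
  have := (Nat.pow_le_pow_right two_pos hti).trans (two_pow_binaryWeight_le i)
  lia

-- With `t = 0` the truncated `t - 1` is harmless: both conditions are then vacuous.
lemma heavyCount_two_mul (n t : ℕ) :
    heavyCount (2 * n) t = heavyCount n t + heavyCount n (t - 1) := by
  induction n with
  | zero => simp
  | succ n ih =>
    simp only [mul_add_one, heavyCount_succ_left, ih, binaryWeight_two_mul,
      binaryWeight_two_mul_add_one, ← Nat.sub_le_iff_le_add]
    ring

lemma heavyCount_two_mul_add_one (n t : ℕ) :
    heavyCount (2 * n + 1) t = heavyCount (n + 1) t + heavyCount n (t - 1) := by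
  rw [heavyCount_succ_left, heavyCount_two_mul, heavyCount_succ_left, binaryWeight_two_mul]
  ring

lemma heavyCount_two_pow_add {m s : ℕ} (hs : s ≤ 2 ^ m) (t : ℕ) :
    heavyCount (2 ^ m + s) (t + 1) = heavyCount (2 ^ m) (t + 1) + heavyCount s t := by
  rw [heavyCount, heavyCount, heavyCount, Nat.count_add, add_right_inj,
    Nat.count_eq_card_filter_range, Nat.count_eq_card_filter_range]
  congr 1
  refine filter_congr fun i hi => ?_
  rw [binaryWeight_two_pow_add ((mem_range.1 hi).trans_le hs), Nat.add_le_add_iff_right]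

lemma heavyCount_two_pow_succ (m t : ℕ) :
    heavyCount (2 ^ (m + 1)) (t + 1) = heavyCount (2 ^ m) (t + 1) + heavyCount (2 ^ m) t := by
  rw [pow_succ, mul_two, heavyCount_two_pow_add le_rfl]

lemma heavyCount_two_pow_eq_add_choose (m t : ℕ) :
    heavyCount (2 ^ m) t = heavyCount (2 ^ m) (t + 1) + m.choose t := by
  induction m generalizing t with
  | zero => cases t <;> simp [heavyCount_eq_zero]
  | succ m ih =>
    cases t with
    | zero =>
      have := ih 0
      rw [heavyCount_two_pow_succ]
      simp only [heavyCount_zero_right, pow_succ, Nat.choose_zero_right] at this ⊢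
      lia
    | succ t =>
      rw [heavyCount_two_pow_succ, heavyCount_two_pow_succ, Nat.choose_succ_succ', ih t,
        ih (t + 1)]
      ring

lemma heavyCount_two_pow_self (m : ℕ) : heavyCount (2 ^ m) m = 1 := by
  rw [heavyCount_two_pow_eq_add_choose, heavyCount_eq_zero (Nat.pow_lt_pow_succ one_lt_two),
    Nat.choose_self]

lemma kRM_eq_heavyCount (r t : ℕ) : kRM r (r + t) = heavyCount (2 ^ (r + t)) t := by
  induction r generalizing t with
  | zero => simp [kRM, heavyCount_two_pow_self]
  | succ r ih =>
    rw [show r + 1 + t = r + (t + 1) by ring, heavyCount_two_pow_eq_add_choose _ t, ← ih, kRM,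
      sum_range_succ, ← kRM, Nat.choose_symm_of_eq_add (show r + (t + 1) = r + 1 + t by ring)]

lemma heavyCount_add_heavyCount_le {a b : ℕ} (hba : b ≤ a) (t : ℕ) :
    heavyCount a t + heavyCount b (t - 1) ≤ heavyCount (a + b) t := by
  induction a using Nat.strong_induction_on generalizing b t with
  | _ a ih =>
    rcases b.eq_zero_or_pos with rfl | hb
    · simp
    rcases hba.eq_or_lt with rfl | hlt
    · rw [← two_mul, heavyCount_two_mul]
    obtain ⟨p, rfl | rfl⟩ := a.even_or_odd' <;> obtain ⟨q, rfl | rfl⟩ := b.even_or_odd'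
    · have high := ih p (by lia) (b := q) (by lia) t
      have low := ih p (by lia) (b := q) (by lia) (t - 1)
      rw [← mul_add]
      simp only [heavyCount_two_mul]
      lia
    · have high := ih p (by lia) (b := q + 1) (by lia) t
      have low := ih p (by lia) (b := q) (by lia) (t - 1)
      rw [← add_assoc, ← mul_add]
      simp only [heavyCount_two_mul, heavyCount_two_mul_add_one, ← add_assoc] at high ⊢
      lia
    · have high := ih (p + 1) (by lia) (b := q) (by lia) t
      have low := ih p (by lia) (b := q) (by lia) (t - 1)
      rw [add_right_comm, ← mul_add]
      simp only [heavyCount_two_mul, heavyCount_two_mul_add_one, add_right_comm p 1] at high ⊢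
      lia
    -- Here the halves are paired crosswise, at the price of comparing the last increments.
    · have high := ih (p + 1) (by lia) (b := q) (by lia) t
      have low := ih p (by lia) (b := q + 1) (by lia) (t - 1)
      have increment : (if t - 1 ≤ binaryWeight q then 1 else 0) ≤
          if t - 1 - 1 ≤ binaryWeight q then 1 else 0 := by
        split_ifs <;> lia
      rw [show 2 * p + 1 + (2 * q + 1) = 2 * (p + q + 1) by ring]
      simp only [heavyCount_two_mul, heavyCount_two_mul_add_one, add_right_comm p 1,
        heavyCount_succ_left q, ← add_assoc] at high low ⊢
      lia

/-! ### The counting identity -/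

lemma bet_add_two (m : ℕ) : bet (m + 2) = 2 ^ m + bet m := by
  rw [bet, bet, pow_add]
  lia

lemma bet_lt_two_pow (m : ℕ) : bet m < 2 ^ m := Nat.div_lt_self (by positivity) (by norm_num)

lemma bet_succ_add_bet (m : ℕ) : bet (m + 1) + bet m + 1 = 2 ^ m := by
  induction m with
  | zero => simp [bet]
  | succ m ih =>
    rw [bet_add_two, pow_succ]
    lia

lemma bet_succ_lt_two_pow (m : ℕ) : bet (m + 1) < 2 ^ m := by
  have := bet_succ_add_bet m
  lia

lemma tauRM_self (m : ℕ) : tauRM m m = 1 := by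
  rw [tauRM, if_neg (by lia)]
  simp

lemma tauRM_zero_left (m : ℕ) : tauRM 0 m = 1 := by
  rcases m.eq_zero_or_pos with rfl | hm
  · exact tauRM_self 0
  · simp [tauRM, Nat.succ_le_iff.2 hm]

lemma tauRM_succ_add_two (r m : ℕ) :
    tauRM (r + 1) (m + 2) = (m + 1).choose (r + 1) + tauRM r m := by
  have shift (j : ℕ) : (m + 2 - (2 * (j + 1) + 1)).choose (r + 1 - (j + 1)) =
      (m - (2 * j + 1)).choose (r - j) := by
    congr 1 <;> lia
  have first : (m + 2 - (2 * 0 + 1)).choose (r + 1 - 0) = (m + 1).choose (r + 1) := rfl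
  rw [tauRM, tauRM]
  split_ifs with h₁ h₂ h₂
  · rw [sum_range_succ', first, sum_congr rfl fun j _ => shift j, add_comm]
  · lia
  · lia
  · rcases le_or_gt r m with hr | hr
    · rw [show m + 2 - (r + 1) = m - r + 1 by lia, sum_range_succ', first,
        sum_congr rfl fun j _ => shift j]
      ring
    · rw [Nat.choose_eq_zero_of_lt (by lia), show m + 2 - (r + 1) = 0 by lia,
        show m - r = 0 by lia, zero_add, sum_range_zero, sum_range_zero]

theorem heavyCount_bet_succ_add_heavyCount_bet_add_tauRM (r t : ℕ) :
    heavyCount (bet (r + t + 1)) t + heavyCount (bet (r + t)) t + tauRM r (r + t) =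
      heavyCount (2 ^ (r + t)) t := by
  induction t generalizing r with
  | zero => simpa [tauRM_self] using bet_succ_add_bet r
  | succ t ih =>
    cases r with
    | zero =>
      simp only [zero_add]
      rw [heavyCount_eq_zero (bet_succ_lt_two_pow _), heavyCount_eq_zero (bet_lt_two_pow _),
        tauRM_zero_left, heavyCount_two_pow_self]
    | succ r =>
      rw [show r + 1 + (t + 1) = r + t + 2 by ring, add_right_comm _ 2 1, bet_add_two, bet_add_two,
        heavyCount_two_pow_add (bet_lt_two_pow _).le, heavyCount_two_pow_add (bet_lt_two_pow _).le,
        tauRM_succ_add_two, heavyCount_two_pow_succ (r + t + 1) t]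
      have recursion := ih r
      have hsymm : (r + t + 1).choose (r + 1) = (r + t + 1).choose t :=
        Nat.choose_symm_of_eq_add (by ring)
      have drop := heavyCount_two_pow_eq_add_choose (r + t + 1) t
      have double := heavyCount_two_pow_succ (r + t) t
      lia

/-! ### Subcodes of small support on the Boolean cube -/

section BooleanCube

variable {F : Type*} [Field F] {m : ℕ}

/-- The functions on the Boolean cube given by polynomials over `F` of degree at most `m - t`, that
is, the Reed–Muller code of order `m - t`. Indexing by `t` instead of the order makes sense of the
negative orders, `t > m`, whose code is zero. -/
def cubeCode (F : Type*) [Field F] (m t : ℕ) : Submodule F ((Fin m → Bool) → F) :=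
  Submodule.span F
    {w | ∃ S : Finset (Fin m), #S + t ≤ m ∧ w = fun x => ∏ j ∈ S, if x j then 1 else 0}

lemma cubeCode_eq_bot {t : ℕ} (h : m < t) : cubeCode F m t = ⊥ := by
  refine Submodule.span_eq_bot.2 ?_
  rintro _ ⟨S, hS, -⟩
  lia

/-- The restriction of functions on the `(m + 1)`-dimensional Boolean cube to the facet where the
first coordinate is `b`. -/
def cubeSlice (F : Type*) [Field F] (m : ℕ) (b : Bool) :
    ((Fin (m + 1) → Bool) → F) →ₗ[F] ((Fin m → Bool) → F) :=
  LinearMap.funLeft F F fun x => (Fin.cons b x : Fin (m + 1) → Bool)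

@[simp]
lemma cubeSlice_apply (b : Bool) (f : (Fin (m + 1) → Bool) → F) (x : Fin m → Bool) :
    cubeSlice F m b f x = f (Fin.cons b x) := rfl

/-- The discrete derivative, in the direction of the first coordinate, of functions on the Boolean
cube. -/
def cubeDeriv (F : Type*) [Field F] (m : ℕ) :
    ((Fin (m + 1) → Bool) → F) →ₗ[F] ((Fin m → Bool) → F) :=
  cubeSlice F m true - cubeSlice F m false

@[simp]
lemma cubeDeriv_apply (f : (Fin (m + 1) → Bool) → F) (x : Fin m → Bool) :
    cubeDeriv F m f x = f (Fin.cons true x) - f (Fin.cons false x) := rfl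

lemma cubeSlice_prod (b : Bool) (S : Finset (Fin (m + 1))) :
    cubeSlice F m b (fun x => ∏ j ∈ S, if x j then 1 else 0) =
      (if 0 ∈ S → b then 1 else 0 : F) • fun x => ∏ j with j.succ ∈ S, if x j then 1 else 0 := by
  ext x
  simp only [cubeSlice_apply, prod_ite_zero, prod_const_one, Pi.smul_apply, smul_eq_mul,
    ite_zero_mul_ite_zero, mul_one]
  congr 1
  simp [Fin.forall_fin_succ]

lemma card_eq_card_filter_succ_mem (S : Finset (Fin (m + 1))) :
    #S = (if 0 ∈ S then 1 else 0) + #{j : Fin m | j.succ ∈ S} := by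
  rw [← Fin.card_filter_univ_succ', filter_univ_mem]

lemma cubeCode_succ_le_comap_cubeDeriv (t : ℕ) :
    cubeCode F (m + 1) t ≤ (cubeCode F m t).comap (cubeDeriv F m) := by
  rw [cubeCode, Submodule.span_le]
  rintro _ ⟨S, hS, rfl⟩
  simp only [Submodule.comap_coe, Set.mem_preimage, cubeDeriv, LinearMap.sub_apply,
    cubeSlice_prod, ← sub_smul, SetLike.mem_coe]
  have := card_eq_card_filter_succ_mem S
  by_cases h0 : 0 ∈ S
  · refine Submodule.smul_mem _ _ (Submodule.subset_span ⟨_, ?_, rfl⟩)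
    rw [if_pos h0] at this
    lia
  · simp [h0]

lemma cubeCode_succ_le_comap_cubeSlice_false (t : ℕ) :
    cubeCode F (m + 1) t ≤ (cubeCode F m (t - 1)).comap (cubeSlice F m false) := by
  rw [cubeCode, Submodule.span_le]
  rintro _ ⟨S, hS, rfl⟩
  simp only [Submodule.comap_coe, Set.mem_preimage, cubeSlice_prod, SetLike.mem_coe]
  have := card_eq_card_filter_succ_mem S
  by_cases h0 : 0 ∈ S
  · simp [h0]
  · refine Submodule.smul_mem _ _ (Submodule.subset_span ⟨_, ?_, rfl⟩)
    have := card_finset_fin_le {j : Fin m | j.succ ∈ S}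
    lia

lemma finrank_map_add_finrank_inf_ker {V W : Type*} [AddCommGroup V] [Module F V]
    [FiniteDimensional F V] [AddCommGroup W] [Module F W] (D : Submodule F V) (φ : V →ₗ[F] W) :
    finrank F (D.map φ) + finrank F ↥(D ⊓ φ.ker) = finrank F D := by
  rw [← LinearMap.finrank_range_add_finrank_ker (φ.domRestrict D), LinearMap.range_domRestrict,
    LinearMap.ker_domRestrict, ← Submodule.map_comap_subtype, Submodule.finrank_map_subtype_eq]

lemma finrank_eq_finrank_map_cubeDeriv_add (D : Submodule F ((Fin (m + 1) → Bool) → F)) :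
    finrank F D = finrank F (D.map (cubeDeriv F m)) + finrank F
      ((D ⊓ (cubeDeriv F m).ker).map (cubeSlice F m false)) := by
  have injective : D ⊓ (cubeDeriv F m).ker ⊓ (cubeSlice F m false).ker = ⊥ := by
    rw [Submodule.eq_bot_iff]
    rintro f ⟨⟨-, hsub⟩, hfalse⟩
    ext x
    obtain ⟨b, y, rfl⟩ : ∃ b y, x = Fin.cons b y := ⟨_, _, (Fin.cons_self_tail x).symm⟩
    have hfalse : f (Fin.cons false y) = 0 := congrFun hfalse y
    have hsub : f (Fin.cons true y) - f (Fin.cons false y) = 0 := congrFun hsub y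
    cases b <;> simp_all
  rw [← finrank_map_add_finrank_inf_ker D (cubeDeriv F m),
    ← finrank_map_add_finrank_inf_ker (_ ⊓ _) (cubeSlice F m false), injective, finrank_bot,
    add_zero]

lemma card_eq_card_filter_cons_mem (J : Finset (Fin (m + 1) → Bool)) :
    #J = #{y | Fin.cons true y ∈ J} + #{y | Fin.cons false y ∈ J} := by
  rw [← filter_univ_mem J, card_filter, ← (Fin.consEquiv fun _ => Bool).sum_comp,
    Fintype.sum_prod_type, Fintype.sum_bool]
  simp_rw [filter_univ_mem, card_filter]
  rfl

lemma finrank_le_heavyCount_of_cube_zero {t : ℕ} {D : Submodule F ((Fin 0 → Bool) → F)}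
    (hD : D ≤ cubeCode F 0 t) {J : Finset (Fin 0 → Bool)} (hJ : ∀ f ∈ D, ∀ x ∉ J, f x = 0) :
    finrank F D ≤ heavyCount #J t := by
  rcases eq_or_ne D ⊥ with rfl | hne
  · simp
  obtain rfl : t = 0 := by
    by_contra ht
    exact hne (le_bot_iff.1 (hD.trans (cubeCode_eq_bot (Nat.pos_of_ne_zero ht)).le))
  obtain ⟨f, hf, hf0⟩ := Submodule.exists_mem_ne_zero_of_ne_bot hne
  obtain ⟨x, hx⟩ := Function.ne_iff.1 hf0
  have hxJ : x ∈ J := by_contra fun h => hx (hJ f hf x h)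
  calc finrank F D ≤ finrank F ((Fin 0 → Bool) → F) := Submodule.finrank_le D
    _ = 1 := by simp
    _ ≤ #J := card_pos.2 ⟨x, hxJ⟩
    _ = heavyCount #J 0 := (heavyCount_zero_right _).symm

theorem finrank_le_heavyCount {t : ℕ} {D : Submodule F ((Fin m → Bool) → F)}
    (hD : D ≤ cubeCode F m t) {J : Finset (Fin m → Bool)} (hJ : ∀ f ∈ D, ∀ x ∉ J, f x = 0) :
    finrank F D ≤ heavyCount #J t := by
  induction m generalizing t with
  | zero => exact finrank_le_heavyCount_of_cube_zero hD hJ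
  | succ m ih =>
    let J' (b : Bool) : Finset (Fin m → Bool) := {y | Fin.cons b y ∈ J}
    have hderiv : finrank F (D.map (cubeDeriv F m)) ≤
        heavyCount #(J' true ∪ J' false) t := by
      refine ih (Submodule.map_le_iff_le_comap.2 (hD.trans (cubeCode_succ_le_comap_cubeDeriv t))) ?_
      rintro _ ⟨f, hf, rfl⟩ y hy
      simp only [J', mem_union, mem_filter_univ, not_or] at hy
      simp [hJ f hf _ hy.1, hJ f hf _ hy.2]
    have hslice : finrank F ((D ⊓ (cubeDeriv F m).ker).map (cubeSlice F m false)) ≤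
        heavyCount #(J' true ∩ J' false) (t - 1) := by
      refine ih (Submodule.map_le_iff_le_comap.2
        (inf_le_left.trans (hD.trans (cubeCode_succ_le_comap_cubeSlice_false t)))) ?_
      rintro _ ⟨f, ⟨hf, hker⟩, rfl⟩ y hy
      have hker : f (Fin.cons true y) = f (Fin.cons false y) := sub_eq_zero.1 (congrFun hker y)
      simp only [J', mem_inter, mem_filter_univ, not_and_or] at hy
      exact hy.elim (fun h => hker.symm.trans (hJ f hf _ h)) (hJ f hf _)
    calc finrank F D
        ≤ heavyCount #(J' true ∪ J' false) t + heavyCount #(J' true ∩ J' false) (t - 1) :=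
          (finrank_eq_finrank_map_cubeDeriv_add D).trans_le (add_le_add hderiv hslice)
      _ ≤ heavyCount (#(J' true ∪ J' false) + #(J' true ∩ J' false)) t :=
          heavyCount_add_heavyCount_le (card_le_card inter_subset_union) t
      _ = heavyCount #J t := by
          rw [card_union_add_card_inter, card_eq_card_filter_cons_mem J]

lemma eval_mem_cubeCode {t : ℕ} {p : MvPolynomial (Fin m) F} (hp : p.totalDegree + t ≤ m) :
    (fun x => MvPolynomial.eval (fun j => if x j then 1 else 0) p) ∈ cubeCode F m t := by
  have expand : (fun x => MvPolynomial.eval (fun j => if x j then 1 else 0) p) =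
      ∑ d ∈ p.support, p.coeff d • fun x : Fin m → Bool =>
        ∏ j ∈ d.support, if x j then (1 : F) else 0 := by
    ext x
    simp only [MvPolynomial.eval_eq, Finset.sum_apply, Pi.smul_apply, smul_eq_mul]
    refine sum_congr rfl fun d _ => congrArg _ (prod_congr rfl fun j hj => ?_)
    rw [ite_pow, one_pow, zero_pow (Finsupp.mem_support_iff.1 hj)]
  rw [expand]
  refine Submodule.sum_mem _ fun d hd =>
    Submodule.smul_mem _ _ (Submodule.subset_span ⟨d.support, ?_, rfl⟩)
  calc #d.support + t ≤ (d.sum fun _ e => e) + t := by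
        gcongr
        rw [card_eq_sum_ones]
        exact sum_le_sum fun j hj => Nat.one_le_iff_ne_zero.2 (Finsupp.mem_support_iff.1 hj)
    _ ≤ p.totalDegree + t := by
        gcongr
        exact MvPolynomial.le_totalDegree hd
    _ ≤ m := hp

end BooleanCube

/-! ### A triangular family of codewords -/

section SubsetIndicator

variable (R : Type*) [CommRing R] {m : ℕ}

/-- The polynomial `∏ j, (1 - X j)` over the zero bits `j` of `i`. At a 0-1 point it takes the value
`1` if all coordinates that are `1` belong to one bits of `i`, and `0` otherwise. -/
noncomputable def subsetIndicator (m i : ℕ) : MvPolynomial (Fin m) R :=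
  ∏ j : Fin m with ¬ i.testBit j.val, (1 - MvPolynomial.X j)

lemma totalDegree_subsetIndicator_add_binaryWeight_le {i : ℕ} (hi : i < 2 ^ m) :
    (subsetIndicator R m i).totalDegree + binaryWeight i ≤ m := by
  have factor (j : Fin m) : (1 - MvPolynomial.X j : MvPolynomial (Fin m) R).totalDegree ≤ 1 := by
    refine (MvPolynomial.totalDegree_sub _ _).trans (max_le (by simp) ?_)
    exact (MvPolynomial.totalDegree_monomial_le _ _).trans (by simp)
  calc (subsetIndicator R m i).totalDegree + binaryWeight i
      ≤ #{j : Fin m | ¬ i.testBit j.val} + #{j : Fin m | i.testBit j} := by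
        rw [binaryWeight_eq_card_testBit hi]
        gcongr
        refine (MvPolynomial.totalDegree_finsetProd _ _).trans ?_
        simpa using sum_le_card_nsmul _ _ 1 fun j _ => factor j
    _ = m := by rw [add_comm, card_filter_add_card_filter_not, card_univ, Fintype.card_fin]

/-- The evaluation vectors of the polynomials `subsetIndicator R m i` for `i < 2 ^ m`. -/
noncomputable def subsetMatrix (m : ℕ) : Matrix (Fin (2 ^ m)) (Fin (2 ^ m)) R := .of fun i x =>
  MvPolynomial.eval (fun j : Fin m => if Nat.testBit x.val j.val then 1 else 0)
    (subsetIndicator R m i)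

lemma subsetMatrix_apply (i x : Fin (2 ^ m)) :
    subsetMatrix R m i x =
      ∏ j : Fin m with ¬ i.val.testBit j.val, if x.val.testBit j then 0 else 1 := by
  simp only [subsetMatrix, Matrix.of_apply, subsetIndicator, map_prod, map_sub, map_one,
    MvPolynomial.eval_X]
  refine prod_congr rfl fun j _ => ?_
  split_ifs <;> simp

lemma subsetMatrix_diag (i : Fin (2 ^ m)) : subsetMatrix R m i i = 1 := by
  rw [subsetMatrix_apply]
  exact prod_eq_one fun j hj => if_neg (mem_filter.1 hj).2

lemma subsetMatrix_eq_zero {i x : Fin (2 ^ m)} (h : i < x) : subsetMatrix R m i x = 0 := by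
  obtain ⟨j, hjx, hji⟩ : ∃ j, x.val.testBit j ∧ ¬ i.val.testBit j := by
    contrapose! h
    exact Nat.le_of_testBit h
  have hj : j < m := (Nat.pow_lt_pow_iff_right one_lt_two).1
    ((Nat.ge_two_pow_of_testBit hjx).trans_lt x.isLt)
  rw [subsetMatrix_apply]
  exact prod_eq_zero (i := (⟨j, hj⟩ : Fin m)) (mem_filter.2 ⟨mem_univ _, hji⟩) (if_pos hjx)

lemma det_subsetMatrix (m : ℕ) : (subsetMatrix R m).det = 1 := by
  have triangular : (subsetMatrix R m).IsLowerTriangular := fun i j h =>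
    subsetMatrix_eq_zero R (OrderDual.toDual_lt_toDual.1 h)
  rw [Matrix.det_of_isLowerTriangular _ triangular]
  simp [subsetMatrix_diag]

lemma linearIndependent_row_subsetMatrix (m : ℕ) : LinearIndependent R (subsetMatrix R m).row :=
  Matrix.linearIndependent_rows_of_isUnit <| (Matrix.isUnit_iff_isUnit_det _).2 <| by
    rw [det_subsetMatrix]
    exact isUnit_one

end SubsetIndicator

/-! ### Subcodes of small support of Reed–Muller codes -/

section Capacity

variable {F : Type} [Field F] {n s d : ℕ} {C D : Submodule F (Fin n → F)}

lemma chi_subset_iff {J : Set (Fin n)} : chi D ⊆ J ↔ D ≤ supportedOn F J := by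
  simp only [chi, supportedOn, Set.ofPred_subset, SetLike.le_def, Submodule.mem_pi,
    Set.mem_compl_iff, Submodule.mem_bot]
  grind

lemma finrank_le_Ucap (hD : D ≤ C) (hs : (chi D).ncard ≤ s) : finrank F D ≤ Ucap C s := by
  refine le_csSup ⟨finrank F (Fin n → F), ?_⟩ ⟨D, hD, hs, rfl⟩
  rintro _ ⟨E, -, -, rfl⟩
  exact E.finrank_le

lemma Ucap_le (h : ∀ D ≤ C, (chi D).ncard ≤ s → finrank F D ≤ d) : Ucap C s ≤ d := by
  refine csSup_le' ?_
  rintro _ ⟨D, hD, hs, rfl⟩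
  exact h D hD hs

end Capacity

/-- The points of the Boolean cube, listed in the standard bit order. -/
noncomputable def bitsEquiv (m : ℕ) : Fin (2 ^ m) ≃ (Fin m → Bool) :=
  Equiv.ofBijective (fun i j => i.val.testBit j) <| by
    refine (Fintype.bijective_iff_injective_and_card _).2 ⟨fun a b h => ?_, by simp⟩
    refine Fin.ext (Nat.eq_of_testBit_eq fun j => ?_)
    rcases lt_or_ge j m with hj | hj
    · exact congrFun h ⟨j, hj⟩
    · have := Nat.pow_le_pow_right two_pos hj
      rw [Nat.testBit_lt_two_pow (a.isLt.trans_le this),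
        Nat.testBit_lt_two_pow (b.isLt.trans_le this)]

lemma testBit_bitsEquiv_symm {m : ℕ} (x : Fin m → Bool) (j : Fin m) :
    ((bitsEquiv m).symm x).val.testBit j = x j :=
  congrFun ((bitsEquiv m).apply_symm_apply x) j

lemma RMcode_le_comap_cubeCode (r t : ℕ) :
    RMcode r (r + t) ≤ (cubeCode (ZMod 2) (r + t) t).comap
      (LinearEquiv.funCongrLeft (ZMod 2) (ZMod 2) (bitsEquiv (r + t)).symm).toLinearMap := by
  rw [RMcode, Submodule.span_le]
  rintro _ ⟨p, hp, rfl⟩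
  simp only [Submodule.comap_coe, Set.mem_preimage, SetLike.mem_coe]
  convert eval_mem_cubeCode (t := t) (p := p) (by lia) using 2 with x
  simp [LinearEquiv.funCongrLeft, testBit_bitsEquiv_symm]

lemma Ucap_RMcode_le (r t s : ℕ) : Ucap (RMcode r (r + t)) s ≤ heavyCount s t := by
  classical
  refine Ucap_le fun D hD hs => ?_
  let e := LinearEquiv.funCongrLeft (ZMod 2) (ZMod 2) (bitsEquiv (r + t)).symm
  let J : Finset (Fin (r + t) → Bool) := (chi D).toFinset.map (bitsEquiv (r + t)).toEmbedding
  have hJ : #J ≤ s := by rwa [card_map, ← Set.ncard_eq_toFinset_card']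
  calc finrank (ZMod 2) D = finrank (ZMod 2) (D.map e.toLinearMap) :=
        (LinearEquiv.finrank_map_eq e D).symm
    _ ≤ heavyCount #J t := by
        refine finrank_le_heavyCount
          (Submodule.map_le_iff_le_comap.2 (hD.trans (RMcode_le_comap_cubeCode r t))) ?_
        rintro _ ⟨w, hw, rfl⟩ x hx
        rw [mem_map_equiv, Set.mem_toFinset] at hx
        exact chi_subset_iff.1 subset_rfl hw _ hx
    _ ≤ heavyCount s t := heavyCount_mono_left t hJ

lemma subsetMatrix_mem_RMcode {r t : ℕ} {i : Fin (2 ^ (r + t))} (ht : t ≤ binaryWeight i) :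
    subsetMatrix (ZMod 2) (r + t) i ∈ RMcode r (r + t) := by
  have := totalDegree_subsetIndicator_add_binaryWeight_le (ZMod 2) i.isLt
  exact Submodule.subset_span ⟨_, by lia, rfl⟩

lemma card_filter_val_lt_and_le_binaryWeight {n s : ℕ} (hs : s ≤ n) (t : ℕ) :
    #{i : Fin n | i.val < s ∧ t ≤ binaryWeight i} = heavyCount s t := by
  rw [heavyCount, Nat.count_eq_card_filter_range, ← card_map Fin.valEmbedding]
  congr 1
  ext i
  simp only [mem_map, Fin.valEmbedding_apply, Fin.exists_iff, mem_filter, mem_range]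
  grind

lemma heavyCount_le_Ucap_RMcode (r t : ℕ) {s : ℕ} (hs : s ≤ 2 ^ (r + t)) :
    heavyCount s t ≤ Ucap (RMcode r (r + t)) s := by
  let A : Finset (Fin (2 ^ (r + t))) := {i | i.val < s ∧ t ≤ binaryWeight i}
  let rows : A → Fin (2 ^ (r + t)) → ZMod 2 := fun i => subsetMatrix (ZMod 2) (r + t) i
  let D := Submodule.span (ZMod 2) (Set.range rows)
  have independent : LinearIndependent (ZMod 2) rows :=
    (linearIndependent_row_subsetMatrix (ZMod 2) (r + t)).comp _ Subtype.val_injective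
  have hA (i : A) : i.val.val < s ∧ t ≤ binaryWeight i.val := (mem_filter.1 i.2).2
  have subcode : D ≤ RMcode r (r + t) := by
    rw [Submodule.span_le, Set.range_subset_iff]
    exact fun i => subsetMatrix_mem_RMcode (hA i).2
  have support : chi D ⊆ ({x | x.val < s} : Finset (Fin (2 ^ (r + t)))) := by
    rw [chi_subset_iff, Submodule.span_le, Set.range_subset_iff]
    intro i x hx
    have hx : s ≤ x.val := by simpa using hx
    exact subsetMatrix_eq_zero _ ((hA i).1.trans_le hx)
  have support_card : (chi D).ncard ≤ s := by
    refine (Set.ncard_le_ncard support (Set.toFinite _)).trans ?_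
    rw [Set.ncard_coe_finset, Fin.card_filter_val_lt]
    exact min_le_right _ _
  calc heavyCount s t = finrank (ZMod 2) D := by
        rw [finrank_span_eq_card independent, Fintype.card_coe,
          card_filter_val_lt_and_le_binaryWeight hs]
    _ ≤ Ucap (RMcode r (r + t)) s := finrank_le_Ucap subcode support_card

theorem Ucap_RMcode_eq_heavyCount (r t : ℕ) {s : ℕ} (hs : s ≤ 2 ^ (r + t)) :
    Ucap (RMcode r (r + t)) s = heavyCount s t :=
  (Ucap_RMcode_le r t s).antisymm (heavyCount_le_Ucap_RMcode r t hs)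

lemma alph_eq_bet_succ (m : ℕ) : alph m = bet (m + 1) := rfl

theorem Ucap_alph_add_Ucap_bet_add_tauRM {r m : ℕ} (hr : r ≤ m) :
    Ucap (RMcode r m) (alph m) + Ucap (RMcode r m) (bet m) + tauRM r m = kRM r m := by
  obtain ⟨t, rfl⟩ := Nat.exists_eq_add_of_le hr
  rw [alph_eq_bet_succ, Ucap_RMcode_eq_heavyCount r t (bet_succ_lt_two_pow _).le,
    Ucap_RMcode_eq_heavyCount r t (bet_lt_two_pow _).le,
    heavyCount_bet_succ_add_heavyCount_bet_add_tauRM, kRM_eq_heavyCount]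

lemma Ucap_RMcode_one {r m : ℕ} (hr : r < m) : Ucap (RMcode r m) 1 = 0 := by
  obtain ⟨t, rfl⟩ := Nat.exists_eq_add_of_lt hr
  have := Ucap_RMcode_le r (t + 1) 1
  rwa [heavyCount_eq_zero (Nat.one_lt_two_pow t.succ_ne_zero), Nat.le_zero] at this

/-- `U_α + U_β + U_1 = k(r,m) − τ(r,m)` for `m ≥ 3`, `0 ≤ r ≤ m−1`. -/
theorem stmt11 (r m : ℕ) (hm : 3 ≤ m) (hr : r ≤ m - 1) :
    ((Ucap (RMcode r m) (alph m) + Ucap (RMcode r m) (bet m) + Ucap (RMcode r m) 1 : ℕ) : ℤ) =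
      (kRM r m : ℤ) - tauRM r m := by
  have hr : r < m := by lia
  rw [Ucap_RMcode_one hr, ← Ucap_alph_add_Ucap_bet_add_tauRM hr.le]
  push_cast
  ring
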